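/- Let ε > 0 and define R : ℝ → ℝ by R(x) = e^{|x|^{2+ε}/(2+ε)} ∫₀^x e^{−|t|^{2+ε}/(2+ε)} dt. Then R is not Lebesgue integrable on (0,+∞), and R is not Lebesgue integrable on (−∞,0). -/

import Mathlib

open Set Filter MeasureTheory

noncomputable section

/-- The Feller function `R` for the operator `ψ'' − x|x|^ε ψ'`. -/
noncomputable def fellerR (ε : ℝ) (x : ℝ) : ℝ :=
  Real.exp (|x| ^ (2 + ε) / (2 + ε)) * ∫ t in (0:ℝ)..x, Real.exp (-|t| ^ (2 + ε) / (2 + ε))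

theorem fellerR_ge (ε : ℝ) (hε : 0 < ε) (x : ℝ) (hx : 0 ≤ x) : x ≤ fellerR ε x := by
  have hp : 0 < 2 + ε := by linarith
  have hc : Continuous fun t : ℝ => Real.exp (-|t| ^ (2 + ε) / (2 + ε)) := by
    have : Continuous fun t : ℝ => |t| ^ (2 + ε) :=
      continuous_abs.rpow_const (fun _ => Or.inr hp.le)
    fun_prop
  have h1 : ∫ t in (0:ℝ)..x, Real.exp (-|x| ^ (2 + ε) / (2 + ε)) ≤
      ∫ t in (0:ℝ)..x, Real.exp (-|t| ^ (2 + ε) / (2 + ε)) := by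
    apply intervalIntegral.integral_mono_on hx (by simp) (hc.intervalIntegrable _ _)
    intro t ht
    have h2 : |t| ^ (2 + ε) ≤ |x| ^ (2 + ε) := by
      apply Real.rpow_le_rpow (abs_nonneg _) _ hp.le
      rw [abs_of_nonneg ht.1, abs_of_nonneg hx]
      exact ht.2
    gcongr
  rw [intervalIntegral.integral_const, smul_eq_mul, sub_zero] at h1
  have h3 := mul_le_mul_of_nonneg_left h1 (Real.exp_pos (|x| ^ (2 + ε) / (2 + ε))).le
  have h4 : Real.exp (|x| ^ (2 + ε) / (2 + ε)) * (x * Real.exp (-|x| ^ (2 + ε) / (2 + ε))) = x := by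
    rw [mul_left_comm, ← Real.exp_add, neg_div, add_neg_cancel, Real.exp_zero, mul_one]
  rw [h4] at h3
  exact h3

theorem fellerR_neg (ε x : ℝ) : fellerR ε (-x) = - fellerR ε x := by
  have h := intervalIntegral.integral_comp_neg (a := 0) (b := x)
    (fun t : ℝ => Real.exp (-|t| ^ (2 + ε) / (2 + ε)))
  simp only [abs_neg, neg_zero] at h
  unfold fellerR
  rw [abs_neg, h, intervalIntegral.integral_symm, mul_neg]

theorem fellerR_aux (f : ℝ → ℝ) (s : Set ℝ) (hs : MeasurableSet s) (hv : volume s = ⊤)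
    (hf : ∀ x ∈ s, 1 ≤ |f x|) : ¬ IntegrableOn f s volume := by
  intro h
  have h1 : IntegrableOn (fun _ : ℝ => (1:ℝ)) s volume := by
    refine Integrable.mono h aestronglyMeasurable_const ?_
    filter_upwards [ae_restrict_mem hs] with x hx
    simpa using hf x hx
  rw [integrableOn_const_iff] at h1
  simp [hv] at h1

/-- `R` is not Lebesgue integrable on `(0,+∞)` nor on `(−∞,0)`. -/
theorem fellerR_not_integrable (ε : ℝ) (hε : 0 < ε) :
    ¬ IntegrableOn (fellerR ε) (Ioi (0:ℝ)) volume ∧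
    ¬ IntegrableOn (fellerR ε) (Iio (0:ℝ)) volume := by
  constructor
  · intro h
    refine fellerR_aux (fellerR ε) (Ioi 1) measurableSet_Ioi Real.volume_Ioi ?_
      (h.mono_set (Ioi_subset_Ioi zero_le_one))
    intro x hx
    have hx' : 1 < x := hx
    have := fellerR_ge ε hε x (by linarith)
    exact le_trans (by linarith) (le_abs_self _)
  · intro h
    refine fellerR_aux (fellerR ε) (Iio (-1)) measurableSet_Iio Real.volume_Iio ?_
      (h.mono_set (Iio_subset_Iio (by norm_num)))
    intro x hx
    have hx' : x < -1 := hx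
    have := fellerR_ge ε hε (-x) (by linarith)
    rw [fellerR_neg] at this
    exact le_trans (by linarith) (neg_le_abs _)
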